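/- With the same support and nonnegativity assumptions as in the Lipschitz lemma, the first term satisfies ‖F(δλ, μ₁) − F(δλ, μ₂)‖²_{L²(ℝ×S¹)} ≤ 4π r_Ω ‖δλ‖²_{L²} ‖μ₂ − μ₁‖²_{L²}. -/

import Mathlib

open MeasureTheory Real

noncomputable section

/-- Direction vector `θ ↦ (cos θ, sin θ)` in the Euclidean plane. -/
def dir (θ : ℝ) : EuclideanSpace ℝ (Fin 2) :=
  (WithLp.equiv 2 (Fin 2 → ℝ)).symm ![Real.cos θ, Real.sin θ]

/-- Perpendicular direction `θ ↦ (-sin θ, cos θ)`. -/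
def perp (θ : ℝ) : EuclideanSpace ℝ (Fin 2) :=
  (WithLp.equiv 2 (Fin 2 → ℝ)).symm ![-Real.sin θ, Real.cos θ]

/-- Point on the line with offset `s` and angle `θ` at parameter `t`. -/
def linePt (s θ t : ℝ) : EuclideanSpace ℝ (Fin 2) := s • perp θ + t • dir θ

/-- The beam transform `Bμ(x, θ) = ∫₀^∞ μ(x + τθ) dτ`. -/
def beam (μ : EuclideanSpace ℝ (Fin 2) → ℝ) (x : EuclideanSpace ℝ (Fin 2)) (θ : ℝ) : ℝ :=
  ∫ τ in Set.Ioi (0 : ℝ), μ (x + τ • dir θ)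

/-- The attenuated Radon transform
`F(λ, μ)(s, θ) = ∫ λ(sθ^⊥ + tθ) exp(-Bμ(sθ^⊥ + tθ, θ)) dt`. -/
def radonF (lam μ : EuclideanSpace ℝ (Fin 2) → ℝ) (s θ : ℝ) : ℝ :=
  ∫ t : ℝ, lam (linePt s θ t) * Real.exp (-(beam μ (linePt s θ t) θ))

/-- The second component of the Fréchet derivative:
`(s, θ) ↦ ∫ λ(γ(t)) B(δμ)(γ(t), θ) exp(-Bμ(γ(t), θ)) dt`, i.e. `F(λ·B(δμ), μ)`. -/
def radonFB (lam μ δμ : EuclideanSpace ℝ (Fin 2) → ℝ) (s θ : ℝ) : ℝ :=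
  ∫ t : ℝ, lam (linePt s θ t) * beam δμ (linePt s θ t) θ *
    Real.exp (-(beam μ (linePt s θ t) θ))

/-- Squared L² norm on the plane. -/
def l2sq (f : EuclideanSpace ℝ (Fin 2) → ℝ) : ℝ := ∫ x, f x ^ 2

/-- L² norm on the plane. -/
def l2 (f : EuclideanSpace ℝ (Fin 2) → ℝ) : ℝ := Real.sqrt (l2sq f)

/-- Squared L² norm on the data space `ℝ × S¹`. -/
def dataNormSq (g : ℝ → ℝ → ℝ) : ℝ := ∫ θ in (0 : ℝ)..(2 * π), ∫ s : ℝ, g s θ ^ 2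

/-- Sup norm of a function on the plane. -/
def supNorm (f : EuclideanSpace ℝ (Fin 2) → ℝ) : ℝ := ⨆ x, |f x|

/-- Admissible maps: nonnegative, bounded, measurable, supported in `B(0, rΩ)`. -/
def Admissible (rΩ : ℝ) (f : EuclideanSpace ℝ (Fin 2) → ℝ) : Prop :=
  Measurable f ∧ (∀ x, 0 ≤ f x) ∧ (∃ C, ∀ x, f x ≤ C) ∧
    Function.support f ⊆ Metric.closedBall 0 rΩ

/-!
On each line, `|e^{-u} - e^{-v}| ≤ |u - v|` for `u, v ≥ 0` bounds the difference of the two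
transforms by `∫∫_{a < b} f(a) g(b)`, where `f` and `g` are the restrictions of `|δλ|` and
`|μ₂ - μ₁|` to the line. Ordering the four variables, the square of this integral is
`2 Q(f, g, f, g) + 4 Q(f, f, g, g)` with `Q(f₁, f₂, f₃, f₄)` the integral of
`f₁(a) f₂(b) f₃(c) f₄(d)` over `a < b < c < d`. By Cauchy–Schwarz `Q(f₁, f₂, f₃, f₄)` is at most
`2 r` times the geometric mean of the energies `E(f₁², f₃²)` and `E(f₂², f₄²)`, where
`E(F, G) = ∫∫_{a < c} F(a) G(c) (c - a)`. The weight `c - a` is the Jacobian of polar coordinates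
centred at the first point, so the energies of the restrictions of `F` and `G` to all lines
integrate to exactly `∫ F · ∫ G`. This gives the constant `(2 + 4) · 2 r = 12 r ≤ 4 π r`.
-/

open scoped ENNReal

section CauchySchwarz

theorem sq_le_indicator_mul_sq {α : Type*} {f : α → ℝ≥0∞} {S : Set α}
    (hf : Function.support f ⊆ S) (x : α) :
    f x ^ 2 ≤ S.indicator 1 x * f x ^ 2 := by
  by_cases hx : x ∈ S
  · simp [hx]
  · simp [Function.notMem_support.1 fun h => hx (hf h)]

variable {α : Type*} [MeasurableSpace α] {μ : Measure α}

theorem sq_lintegral_le_of_sq_le_mul {h F G : α → ℝ≥0∞} (hF : AEMeasurable F μ)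
    (hG : AEMeasurable G μ) (hle : ∀ x, h x ^ 2 ≤ F x * G x) :
    (∫⁻ x, h x ∂μ) ^ 2 ≤ (∫⁻ x, F x ∂μ) * ∫⁻ x, G x ∂μ := by
  have sq_sqrt : ∀ a : ℝ≥0∞, (a ^ (1 / 2 : ℝ)) ^ 2 = a := fun a => by
    rw [← ENNReal.rpow_natCast, ← ENNReal.rpow_mul]; norm_num
  have hle' : ∀ x, h x ≤ F x ^ (1 / 2 : ℝ) * G x ^ (1 / 2 : ℝ) := fun x => by
    rw [← ENNReal.pow_le_pow_left_iff two_ne_zero, mul_pow, sq_sqrt, sq_sqrt]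
    exact hle x
  calc (∫⁻ x, h x ∂μ) ^ 2
      ≤ ((∫⁻ x, F x ∂μ) ^ (1 / 2 : ℝ) * (∫⁻ x, G x ∂μ) ^ (1 / 2 : ℝ)) ^ 2 := by
        gcongr
        exact (lintegral_mono hle').trans <|
          ENNReal.lintegral_mul_norm_pow_le hF hG (by norm_num) (by norm_num) (by norm_num)
    _ = (∫⁻ x, F x ∂μ) * ∫⁻ x, G x ∂μ := by rw [mul_pow, sq_sqrt, sq_sqrt]

end CauchySchwarz

section TailIntegral

variable {α : Type*} [LinearOrder α] [MeasurableSpace α] {μ : Measure α}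
  {f g h F G f₁ f₂ f₃ f₄ : α → ℝ≥0∞} {a b : α}

/-- The tail function `a ↦ ∫_{x > a} f(x) dμ(x)`, the building block of integrals over ordered
tuples. -/
def tailIntegral (μ : Measure α) (f : α → ℝ≥0∞) (a : α) : ℝ≥0∞ := ∫⁻ x in Set.Ioi a, f x ∂μ

/-- The integral of `f₁(a) f₂(b) f₃(c) f₄(d)` over all quadruples `a < b < c < d`. -/
def quadIntegral (μ : Measure α) (f₁ f₂ f₃ f₄ : α → ℝ≥0∞) : ℝ≥0∞ :=
  ∫⁻ a, f₁ a * tailIntegral μ (fun b => f₂ b * tailIntegral μ (fun c =>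
    f₃ c * tailIntegral μ f₄ c) b) a ∂μ

/-- The integral of `F(a) G(c)` over all triples `a < b < c`. For Lebesgue measure on the line
this is the double integral of `F(a) G(c) (c - a)₊`. -/
def gapEnergy (μ : Measure α) (F G : α → ℝ≥0∞) : ℝ≥0∞ :=
  ∫⁻ a, F a * tailIntegral μ (tailIntegral μ G) a ∂μ

theorem sq_tailIntegral_le_of_sq_le_mul (hF : Measurable F) (hG : Measurable G)
    (hle : ∀ x, h x ^ 2 ≤ F x * G x) (a : α) :
    tailIntegral μ h a ^ 2 ≤ tailIntegral μ F a * tailIntegral μ G a :=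
  sq_lintegral_le_of_sq_le_mul hF.aemeasurable hG.aemeasurable hle

theorem sq_tailIntegral_le_measure_mul {S : Set α} (hS : MeasurableSet S) (hf : Measurable f)
    (hfS : Function.support f ⊆ S) (a : α) :
    tailIntegral μ f a ^ 2 ≤ μ S * tailIntegral μ (fun x => f x ^ 2) a := by
  refine (sq_tailIntegral_le_of_sq_le_mul (measurable_one.indicator hS) (hf.pow_const 2)
    (sq_le_indicator_mul_sq hfS) a).trans (mul_le_mul_left ?_ _)
  exact (setLIntegral_le_lintegral _ _).trans_eq (lintegral_indicator_one hS)

variable [TopologicalSpace α] [OrderTopology α] [BorelSpace α]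

@[fun_prop]
theorem measurable_tailIntegral : Measurable (tailIntegral μ f) :=
  Antitone.measurable fun _ _ hab => lintegral_mono_set (Set.Ioi_subset_Ioi hab)

theorem tailIntegral_restrict_Ioi (hab : a ≤ b) :
    tailIntegral (μ.restrict (Set.Ioi a)) f b = tailIntegral μ f b := by
  rw [tailIntegral, Measure.restrict_restrict measurableSet_Ioi,
    Set.inter_eq_left.2 (Set.Ioi_subset_Ioi hab), tailIntegral]

/- Cauchy–Schwarz over the quadruples `a < b < c < d`, separating `f₁(a) f₃(c)` from
`f₂(b) f₄(d)`. The pairing is chosen so that one of the two points integrated out is trapped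
between the two that remain, which produces the gap weight of `gapEnergy`. -/
theorem sq_quadIntegral_le {S : Set α} (hS : MeasurableSet S) (hμS : μ S ≠ ∞)
    (hf₁ : Measurable f₁) (hf₂ : Measurable f₂) (hf₃ : Measurable f₃) (hf₄ : Measurable f₄)
    (hf₁S : Function.support f₁ ⊆ S) (hf₄S : Function.support f₄ ⊆ S) :
    quadIntegral μ f₁ f₂ f₃ f₄ ^ 2 ≤
      μ S ^ 2 * gapEnergy μ (fun x => f₁ x ^ 2) (fun x => f₃ x ^ 2) *
        gapEnergy μ (fun x => f₂ x ^ 2) (fun x => f₄ x ^ 2) := by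
  set E₂₄ := gapEnergy μ (fun x => f₂ x ^ 2) (fun x => f₄ x ^ 2)
  set u : α → ℝ≥0∞ := fun c => f₃ c * tailIntegral μ f₄ c with hu
  set v : α → ℝ≥0∞ := fun b => f₂ b * tailIntegral μ u b with hv
  have hc : ∀ b, tailIntegral μ u b ^ 2 ≤ tailIntegral μ (fun c => μ S * f₃ c ^ 2) b *
      tailIntegral μ (tailIntegral μ fun x => f₄ x ^ 2) b :=
    sq_tailIntegral_le_of_sq_le_mul (by fun_prop) (by fun_prop) fun c => by
      rw [hu, mul_pow, mul_comm (μ S), mul_assoc]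
      exact mul_le_mul_right (sq_tailIntegral_le_measure_mul hS hf₄ hf₄S c) _
  have hb : ∀ a, tailIntegral μ v a ^ 2 ≤
      tailIntegral μ (tailIntegral μ fun c => μ S * f₃ c ^ 2) a * E₂₄ := fun a => by
    refine (sq_tailIntegral_le_of_sq_le_mul measurable_tailIntegral (G := fun b =>
      f₂ b ^ 2 * tailIntegral μ (tailIntegral μ fun x => f₄ x ^ 2) b)
      (by fun_prop) (fun b => ?_) a).trans (mul_le_mul_right (setLIntegral_le_lintegral _ _) _)
    rw [hv, mul_pow, mul_left_comm]
    exact mul_le_mul_right (hc b) _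
  have ha := sq_lintegral_le_of_sq_le_mul (μ := μ) (h := fun a => f₁ a * tailIntegral μ v a)
    (F := fun a => f₁ a ^ 2 * tailIntegral μ (tailIntegral μ fun c => μ S * f₃ c ^ 2) a)
    (G := fun a => S.indicator 1 a * E₂₄) (by fun_prop)
    ((measurable_one.indicator hS).mul_const _).aemeasurable fun a => by
      calc (f₁ a * tailIntegral μ v a) ^ 2
          ≤ S.indicator 1 a * f₁ a ^ 2 *
            (tailIntegral μ (tailIntegral μ fun c => μ S * f₃ c ^ 2) a * E₂₄) := by
            rw [mul_pow]
            exact mul_le_mul' (sq_le_indicator_mul_sq hf₁S a) (hb a)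
        _ = _ := by ring
  rw [lintegral_mul_const _ (measurable_one.indicator hS), lintegral_indicator_one hS] at ha
  refine ha.trans_eq ?_
  simp only [gapEnergy, tailIntegral, lintegral_const_mul' _ _ hμS, mul_left_comm _ (μ S)]
  ring

variable [SecondCountableTopology α]

theorem lintegral_mul_tailIntegral_comm [SFinite μ] (hf : Measurable f) (hg : Measurable g) :
    ∫⁻ x, f x * tailIntegral μ g x ∂μ = ∫⁻ y, g y * ∫⁻ x in Set.Iio y, f x ∂μ ∂μ := by
  have hmeas : Measurable fun p : α × α => {p : α × α | p.1 < p.2}.indicator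
      (fun p => f p.1 * g p.2) p :=
    Measurable.indicator (by fun_prop) (measurableSet_lt measurable_fst measurable_snd)
  calc ∫⁻ x, f x * tailIntegral μ g x ∂μ
      = ∫⁻ x, ∫⁻ y, {p : α × α | p.1 < p.2}.indicator (fun p => f p.1 * g p.2) (x, y) ∂μ ∂μ := by
        refine lintegral_congr fun x => ?_
        rw [tailIntegral, ← lintegral_const_mul _ hg, ← lintegral_indicator measurableSet_Ioi]
        rfl
    _ = ∫⁻ y, ∫⁻ x, {p : α × α | p.1 < p.2}.indicator (fun p => f p.1 * g p.2) (x, y) ∂μ ∂μ :=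
        lintegral_lintegral_swap hmeas.aemeasurable
    _ = ∫⁻ y, g y * ∫⁻ x in Set.Iio y, f x ∂μ ∂μ := by
        refine lintegral_congr fun y => ?_
        rw [← lintegral_const_mul _ hf, ← lintegral_indicator measurableSet_Iio]
        simp only [mul_comm (g y)]
        rfl

theorem tailIntegral_tailIntegral [SFinite μ] (hg : Measurable g) (a : α) :
    tailIntegral μ (tailIntegral μ g) a = ∫⁻ c in Set.Ioi a, g c * μ (Set.Ioo a c) ∂μ := by
  calc tailIntegral μ (tailIntegral μ g) a
      = ∫⁻ b in Set.Ioi a, 1 * tailIntegral (μ.restrict (Set.Ioi a)) g b ∂μ :=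
        setLIntegral_congr_fun measurableSet_Ioi fun b hb => by
          rw [one_mul, tailIntegral_restrict_Ioi (le_of_lt hb)]
    _ = ∫⁻ c in Set.Ioi a, g c * μ (Set.Ioo a c) ∂μ := by
        rw [lintegral_mul_tailIntegral_comm measurable_const hg]
        simp only [lintegral_one, Measure.restrict_apply_univ,
          Measure.restrict_apply measurableSet_Iio, Set.Iio_inter_Ioi]

section Parametric

variable {X : Type*} [MeasurableSpace X] [SFinite μ] {u u₁ u₂ u₃ u₄ : X → α → ℝ≥0∞}

theorem measurable_tailIntegral_param (hu : Measurable fun p : X × α => u p.1 p.2) :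
    Measurable fun p : X × α => tailIntegral μ (u p.1) p.2 := by
  have hind : Measurable fun q : (X × α) × α =>
      {q : (X × α) × α | q.1.2 < q.2}.indicator (fun q => u q.1.1 q.2) q :=
    Measurable.indicator (hu.comp (f := fun q : (X × α) × α => (q.1.1, q.2)) (by fun_prop))
      (measurableSet_lt (by fun_prop) (by fun_prop))
  simp only [tailIntegral, ← lintegral_indicator measurableSet_Ioi]
  exact hind.lintegral_prod_right'

theorem measurable_gapEnergy_param (hu₁ : Measurable fun p : X × α => u₁ p.1 p.2)
    (hu₂ : Measurable fun p : X × α => u₂ p.1 p.2) :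
    Measurable fun x => gapEnergy μ (u₁ x) (u₂ x) :=
  (hu₁.mul (measurable_tailIntegral_param (u := fun x => tailIntegral μ (u₂ x))
    (measurable_tailIntegral_param hu₂))).lintegral_prod_right'

theorem measurable_quadIntegral_param (hu₁ : Measurable fun p : X × α => u₁ p.1 p.2)
    (hu₂ : Measurable fun p : X × α => u₂ p.1 p.2) (hu₃ : Measurable fun p : X × α => u₃ p.1 p.2)
    (hu₄ : Measurable fun p : X × α => u₄ p.1 p.2) :
    Measurable fun x => quadIntegral μ (u₁ x) (u₂ x) (u₃ x) (u₄ x) := by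
  have hc := hu₃.mul (measurable_tailIntegral_param (μ := μ) hu₄)
  have hb := hu₂.mul (measurable_tailIntegral_param (μ := μ)
    (u := fun x c => u₃ x c * tailIntegral μ (u₄ x) c) hc)
  exact (hu₁.mul (measurable_tailIntegral_param (μ := μ)
    (u := fun x b => u₂ x b * tailIntegral μ (fun c => u₃ x c * tailIntegral μ (u₄ x) c) b)
    hb)).lintegral_prod_right'

end Parametric

section Shuffle

variable [SFinite μ] [NullSingletonClass μ]

/- Either the first variable or the second one is the smaller of the two: for integrals over
ordered tuples this is the shuffle product of iterated integrals. -/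
theorem lintegral_mul_lintegral_eq_add_tailIntegral (hf : Measurable f) (hg : Measurable g) :
    (∫⁻ x, f x ∂μ) * ∫⁻ x, g x ∂μ =
      ∫⁻ x, f x * tailIntegral μ g x ∂μ + ∫⁻ x, g x * tailIntegral μ f x ∂μ := by
  have hsplit : ∀ x, ∫⁻ y, g y ∂μ = tailIntegral μ g x + ∫⁻ y in Set.Iio x, g y ∂μ := fun x => by
    rw [← lintegral_add_compl g measurableSet_Ioi, Set.compl_Ioi,
      setLIntegral_congr Iio_ae_eq_Iic.symm, tailIntegral]
  calc (∫⁻ x, f x ∂μ) * ∫⁻ x, g x ∂μ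
      = ∫⁻ x, (f x * tailIntegral μ g x + f x * ∫⁻ y in Set.Iio x, g y ∂μ) ∂μ := by
        rw [← lintegral_mul_const _ hf]
        exact lintegral_congr fun x => by rw [← mul_add, ← hsplit]
    _ = _ := by
        rw [lintegral_add_left (by fun_prop), lintegral_mul_tailIntegral_comm hg hf]

theorem tailIntegral_mul_tailIntegral_eq_add (hf : Measurable f) (hg : Measurable g) (a : α) :
    tailIntegral μ f a * tailIntegral μ g a =
      tailIntegral μ (fun x => f x * tailIntegral μ g x) a +
        tailIntegral μ (fun x => g x * tailIntegral μ f x) a := by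
  have hrestrict : ∀ u v : α → ℝ≥0∞,
      ∫⁻ x in Set.Ioi a, u x * tailIntegral (μ.restrict (Set.Ioi a)) v x ∂μ =
        tailIntegral μ (fun x => u x * tailIntegral μ v x) a := fun u v =>
    setLIntegral_congr_fun measurableSet_Ioi fun x hx => by
      rw [tailIntegral_restrict_Ioi (le_of_lt hx)]
  rw [← hrestrict, ← hrestrict]
  exact lintegral_mul_lintegral_eq_add_tailIntegral hf hg

theorem sq_tailIntegral (hg : Measurable g) (a : α) :
    tailIntegral μ g a ^ 2 = 2 * tailIntegral μ (fun x => g x * tailIntegral μ g x) a := by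
  rw [sq, tailIntegral_mul_tailIntegral_eq_add hg hg, two_mul]

theorem sq_lintegral_mul_tailIntegral (hf : Measurable f) (hg : Measurable g) :
    (∫⁻ t, f t * tailIntegral μ g t ∂μ) ^ 2 =
      2 * quadIntegral μ f g f g + 4 * quadIntegral μ f f g g := by
  set u : α → ℝ≥0∞ := fun t => f t * tailIntegral μ g t with hu
  have hu_meas : Measurable u := by fun_prop
  have hcollect : ∀ a, tailIntegral μ (fun b => u b * tailIntegral μ g b) a =
      2 * tailIntegral μ (fun b => f b * tailIntegral μ (fun c =>
        g c * tailIntegral μ g c) b) a := fun a => by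
    rw [tailIntegral, tailIntegral, ← lintegral_const_mul' _ _ ENNReal.ofNat_ne_top]
    refine lintegral_congr fun b => ?_
    rw [hu, mul_assoc, ← sq, sq_tailIntegral hg, mul_left_comm]
  have hshuffle : ∀ a, u a * tailIntegral μ u a =
      f a * tailIntegral μ (fun b => g b * tailIntegral μ u b) a +
        2 * (f a * tailIntegral μ (fun b => f b * tailIntegral μ (fun c =>
          g c * tailIntegral μ g c) b) a) := fun a => by
    rw [hu, mul_assoc, ← hu, tailIntegral_mul_tailIntegral_eq_add hg hu_meas, hcollect]
    ring
  calc (∫⁻ t, u t ∂μ) ^ 2 = 2 * ∫⁻ a, u a * tailIntegral μ u a ∂μ := by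
        rw [sq, lintegral_mul_lintegral_eq_add_tailIntegral hu_meas hu_meas, two_mul]
    _ = 2 * quadIntegral μ f g f g + 4 * quadIntegral μ f f g g := by
        simp only [hshuffle]
        rw [lintegral_add_left (by fun_prop), lintegral_const_mul' _ _ ENNReal.ofNat_ne_top,
          quadIntegral, quadIntegral]
        ring

end Shuffle

end TailIntegral

section Lines

local notation "Plane" => EuclideanSpace ℝ (Fin 2)

variable {f g F G f₁ f₂ f₃ f₄ : Plane → ℝ≥0∞} {r : ℝ}

theorem linePt_apply_zero (s θ t : ℝ) : linePt s θ t 0 = -s * sin θ + t * cos θ := by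
  simp [linePt, perp, dir]

theorem linePt_apply_one (s θ t : ℝ) : linePt s θ t 1 = s * cos θ + t * sin θ := by
  simp [linePt, perp, dir]

theorem norm_linePt_sq (s θ t : ℝ) : ‖linePt s θ t‖ ^ 2 = s ^ 2 + t ^ 2 := by
  rw [EuclideanSpace.real_norm_sq_eq, Fin.sum_univ_two, linePt_apply_zero, linePt_apply_one]
  linear_combination (s ^ 2 + t ^ 2) * sin_sq_add_cos_sq θ

theorem linePt_add_smul_dir (s θ t τ : ℝ) : linePt s θ t + τ • dir θ = linePt s θ (t + τ) := by
  simp only [linePt]; module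

@[fun_prop]
theorem continuous_dir : Continuous dir :=
  (PiLp.continuous_toLp 2 _).comp <| continuous_pi <|
    Fin.forall_fin_two.2 ⟨continuous_cos, continuous_sin⟩

@[fun_prop]
theorem continuous_perp : Continuous perp :=
  (PiLp.continuous_toLp 2 _).comp <| continuous_pi <|
    Fin.forall_fin_two.2 ⟨continuous_sin.neg, continuous_cos⟩

@[fun_prop]
theorem measurable_linePt {X : Type*} [MeasurableSpace X] {s θ t : X → ℝ} (hs : Measurable s)
    (hθ : Measurable θ) (ht : Measurable t) : Measurable fun x => linePt (s x) (θ x) (t x) :=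
  (hs.smul (continuous_perp.measurable.comp hθ)).add
    (ht.smul (continuous_dir.measurable.comp hθ))

theorem support_comp_linePt_subset {M : Type*} [Zero M] {f : Plane → M}
    (hr : Function.support f ⊆ Metric.closedBall 0 r) (s θ : ℝ) :
    (Function.support fun t => f (linePt s θ t)) ⊆ Set.Icc (-r) r := fun t ht => by
  have hnorm : ‖linePt s θ t‖ ≤ r := mem_closedBall_zero_iff.1 (hr ht)
  refine abs_le.1 ((abs_le_of_sq_le_sq ?_ (norm_nonneg _)).trans hnorm)
  rw [norm_linePt_sq]
  exact le_add_of_nonneg_left (sq_nonneg s)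

/-- Cartesian coordinates `(x, y) ↦ !₂[x, y]` as a measurable equivalence. -/
def planeEquiv : ℝ × ℝ ≃ᵐ Plane :=
  MeasurableEquiv.finTwoArrow.symm.trans (MeasurableEquiv.toLp 2 (Fin 2 → ℝ))

theorem measurePreserving_planeEquiv : MeasurePreserving planeEquiv :=
  (PiLp.volume_preserving_toLp (Fin 2)).comp (volume_preserving_finTwoArrow ℝ).symm

/-- The isometry of the plane taking the standard basis to `perp θ`, `dir θ`. -/
def lineIsometry (θ : ℝ) : Plane ≃ₗᵢ[ℝ] Plane :=
  LinearIsometry.toLinearIsometryEquiv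
    { toFun := fun x => linePt (x 0) θ (x 1)
      map_add' := fun x y => by simp only [linePt, PiLp.add_apply]; module
      map_smul' := fun c x => by
        simp only [linePt, PiLp.smul_apply, smul_eq_mul, RingHom.id_apply]
        module
      norm_map' := fun x => by
        rw [← sq_eq_sq₀ (norm_nonneg _) (norm_nonneg _), EuclideanSpace.real_norm_sq_eq x,
          Fin.sum_univ_two]
        exact norm_linePt_sq _ _ _ } rfl

/-- Line coordinates `(s, t) ↦ s θ^⊥ + t θ` as a measurable equivalence. -/
def lineEquiv (θ : ℝ) : ℝ × ℝ ≃ᵐ Plane :=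
  planeEquiv.trans (lineIsometry θ).toMeasurableEquiv

theorem measurePreserving_lineEquiv (θ : ℝ) : MeasurePreserving (lineEquiv θ) :=
  (lineIsometry θ).measurePreserving.comp measurePreserving_planeEquiv

theorem lintegral_linePt (hg : Measurable g) (θ : ℝ) :
    ∫⁻ s, ∫⁻ t, g (linePt s θ t) = ∫⁻ x, g x := by
  rw [← (measurePreserving_lineEquiv θ).lintegral_comp hg, Measure.volume_eq_prod,
    lintegral_prod (fun q => g (lineEquiv θ q)) (hg.comp (lineEquiv θ).measurable).aemeasurable]
  rfl

theorem ae_integrable_linePt {f : Plane → ℝ} (hf : Integrable f) (θ : ℝ) :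
    ∀ᵐ s, Integrable fun t => f (linePt s θ t) :=
  ((measurePreserving_lineEquiv θ).integrable_comp_of_integrable hf).prod_right_ae

theorem lintegral_polar_dir (hg : Measurable g) :
    ∫⁻ θ in Set.Ioc 0 (2 * π), ∫⁻ ρ in Set.Ioi (0 : ℝ), ENNReal.ofReal ρ * g (ρ • dir θ) =
      ∫⁻ x, g x := by
  set Φ : ℝ → ℝ≥0∞ := fun θ => ∫⁻ ρ in Set.Ioi (0 : ℝ), ENNReal.ofReal ρ * g (ρ • dir θ)
  have hpolar : ∀ ρ θ : ℝ, -planeEquiv (ρ * cos θ, ρ * sin θ) = ρ • dir (θ + π) := fun ρ θ => by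
    ext i; fin_cases i <;> simp [planeEquiv, dir]
  have hmeas : Measurable fun q : ℝ × ℝ => ENNReal.ofReal q.1 * g (q.1 • dir (q.2 + π)) := by
    fun_prop
  have hshift : ∫⁻ θ in Set.Ioo (-π) π, Φ (θ + π) = ∫⁻ θ in Set.Ioo 0 (2 * π), Φ θ := by
    rw [← (measurePreserving_add_right volume π).setLIntegral_comp_preimage_emb
      (measurableEmbedding_addRight π) Φ (Set.Ioo 0 (2 * π)), Set.preimage_add_const_Ioo,
      zero_sub, two_mul, add_sub_cancel_right]
  calc ∫⁻ θ in Set.Ioc 0 (2 * π), Φ θ = ∫⁻ θ in Set.Ioo (-π) π, Φ (θ + π) := by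
        rw [hshift, setLIntegral_congr Ioo_ae_eq_Ioc]
    _ = ∫⁻ q : ℝ × ℝ, g (-planeEquiv q) := by
        rw [← lintegral_comp_polarCoord_symm]
        simp only [polarCoord_target, polarCoord_symm_apply, hpolar, smul_eq_mul]
        rw [Measure.volume_eq_prod, ← Measure.prod_restrict, lintegral_prod_symm' _ hmeas]
    _ = ∫⁻ x, g x := by
        rw [measurePreserving_planeEquiv.lintegral_comp (f := fun x => g (-x)) (by fun_prop),
          lintegral_neg_eq_self]

theorem tailIntegral_tailIntegral_volume {G : ℝ → ℝ≥0∞} (hG : Measurable G) (a : ℝ) :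
    tailIntegral volume (tailIntegral volume G) a =
      ∫⁻ ρ in Set.Ioi 0, ENNReal.ofReal ρ * G (a + ρ) := by
  rw [tailIntegral_tailIntegral hG,
    ← (measurePreserving_add_left volume a).setLIntegral_comp_preimage_emb
      (measurableEmbedding_addLeft a), Set.preimage_const_add_Ioi, sub_self]
  simp only [Real.volume_Ioo, add_sub_cancel_left, mul_comm]

theorem lintegral_gapEnergy_linePt (hF : Measurable F) (hG : Measurable G) :
    ∫⁻ θ in Set.Ioc 0 (2 * π), ∫⁻ s,
        gapEnergy volume (fun t => F (linePt s θ t)) (fun t => G (linePt s θ t)) =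
      (∫⁻ x, F x) * ∫⁻ x, G x := by
  set K : ℝ → Plane → ℝ≥0∞ := fun θ x =>
    F x * ∫⁻ ρ in Set.Ioi 0, ENNReal.ofReal ρ * G (x + ρ • dir θ) with hK
  have hK_meas : Measurable (Function.uncurry K) := by
    have : Measurable fun q : (ℝ × Plane) × ℝ =>
      ENNReal.ofReal q.2 * G (q.1.2 + q.2 • dir q.1.1) := by fun_prop
    exact (hF.comp measurable_snd).mul this.lintegral_prod_right'
  have hline : ∀ θ s, gapEnergy volume (fun t => F (linePt s θ t)) (fun t => G (linePt s θ t)) =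
      ∫⁻ t, K θ (linePt s θ t) := fun θ s => by
    refine lintegral_congr fun t => ?_
    rw [tailIntegral_tailIntegral_volume (by fun_prop)]
    simp only [hK, linePt_add_smul_dir]
  calc ∫⁻ θ in Set.Ioc 0 (2 * π), ∫⁻ s,
        gapEnergy volume (fun t => F (linePt s θ t)) (fun t => G (linePt s θ t))
      = ∫⁻ θ in Set.Ioc 0 (2 * π), ∫⁻ x, K θ x := by
        simp only [hline]
        exact lintegral_congr fun θ => lintegral_linePt hK_meas.of_uncurry_left θ
    _ = ∫⁻ x, ∫⁻ θ in Set.Ioc 0 (2 * π), K θ x :=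
        lintegral_lintegral_swap hK_meas.aemeasurable
    _ = ∫⁻ x, F x * ∫⁻ y, G (x + y) := by
        refine lintegral_congr fun x => ?_
        have hmeas : Measurable fun q : ℝ × ℝ => ENNReal.ofReal q.2 * G (x + q.2 • dir q.1) := by
          fun_prop
        rw [lintegral_const_mul _ hmeas.lintegral_prod_right',
          lintegral_polar_dir (g := fun y => G (x + y)) (by fun_prop)]
    _ = (∫⁻ x, F x) * ∫⁻ x, G x := by
        simp only [lintegral_add_left_eq_self G]
        exact lintegral_mul_const _ hF

theorem sq_lintegral_quadIntegral_linePt_le (hf₁ : Measurable f₁) (hf₂ : Measurable f₂)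
    (hf₃ : Measurable f₃) (hf₄ : Measurable f₄)
    (hf₁r : Function.support f₁ ⊆ Metric.closedBall 0 r)
    (hf₄r : Function.support f₄ ⊆ Metric.closedBall 0 r) :
    (∫⁻ θ in Set.Ioc 0 (2 * π), ∫⁻ s, quadIntegral volume (fun t => f₁ (linePt s θ t))
        (fun t => f₂ (linePt s θ t)) (fun t => f₃ (linePt s θ t))
        (fun t => f₄ (linePt s θ t))) ^ 2 ≤
      ENNReal.ofReal (2 * r) ^ 2 * ((∫⁻ x, f₁ x ^ 2) * ∫⁻ x, f₃ x ^ 2) *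
        ((∫⁻ x, f₂ x ^ 2) * ∫⁻ x, f₄ x ^ 2) := by
  set L := ENNReal.ofReal (2 * r) with hL
  have hvol : volume (Set.Icc (-r) r) = L := by rw [Real.volume_Icc, hL]; ring_nf
  set E : (Plane → ℝ≥0∞) → (Plane → ℝ≥0∞) → ℝ → ℝ → ℝ≥0∞ := fun u v θ s =>
    gapEnergy volume (fun t => u (linePt s θ t) ^ 2) (fun t => v (linePt s θ t) ^ 2)
  have hE_meas : ∀ {u v}, Measurable u → Measurable v → Measurable fun q : ℝ × ℝ => E u v q.1 q.2 :=
    fun hu hv => measurable_gapEnergy_param (by fun_prop) (by fun_prop)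
  have hE_int : ∀ {u v}, Measurable u → Measurable v →
      ∫⁻ θ in Set.Ioc 0 (2 * π), ∫⁻ s, E u v θ s = (∫⁻ x, u x ^ 2) * ∫⁻ x, v x ^ 2 := fun hu hv =>
    lintegral_gapEnergy_linePt (hu.pow_const 2) (hv.pow_const 2)
  have hline : ∀ θ s, quadIntegral volume (fun t => f₁ (linePt s θ t))
      (fun t => f₂ (linePt s θ t)) (fun t => f₃ (linePt s θ t)) (fun t => f₄ (linePt s θ t)) ^ 2 ≤
        L ^ 2 * E f₁ f₃ θ s * E f₂ f₄ θ s := fun θ s => by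
    rw [← hvol]
    exact sq_quadIntegral_le measurableSet_Icc measure_Icc_lt_top.ne (by fun_prop) (by fun_prop)
      (by fun_prop) (by fun_prop) (support_comp_linePt_subset hf₁r s θ)
      (support_comp_linePt_subset hf₄r s θ)
  have hL_ne : L ^ 2 ≠ ∞ := ENNReal.pow_ne_top ENNReal.ofReal_ne_top
  rw [← hE_int hf₁ hf₃, ← hE_int hf₂ hf₄, ← lintegral_const_mul' _ _ hL_ne]
  refine sq_lintegral_le_of_sq_le_mul
    ((hE_meas hf₁ hf₃).lintegral_prod_right'.const_mul _).aemeasurable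
    (hE_meas hf₂ hf₄).lintegral_prod_right'.aemeasurable fun θ => ?_
  rw [← lintegral_const_mul' _ _ hL_ne]
  exact sq_lintegral_le_of_sq_le_mul
    (((hE_meas hf₁ hf₃).comp measurable_prodMk_left).const_mul _).aemeasurable
    ((hE_meas hf₂ hf₄).comp measurable_prodMk_left).aemeasurable (hline θ)

theorem lintegral_sq_linePt_mul_tailIntegral_le (hf : Measurable f) (hg : Measurable g)
    (hfr : Function.support f ⊆ Metric.closedBall 0 r)
    (hgr : Function.support g ⊆ Metric.closedBall 0 r) :
    ∫⁻ θ in Set.Ioc 0 (2 * π), ∫⁻ s,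
        (∫⁻ t, f (linePt s θ t) * tailIntegral volume (fun τ => g (linePt s θ τ)) t) ^ 2 ≤
      12 * ENNReal.ofReal r * (∫⁻ x, f x ^ 2) * ∫⁻ x, g x ^ 2 := by
  set Q : (Plane → ℝ≥0∞) → (Plane → ℝ≥0∞) → ℝ → ℝ → ℝ≥0∞ := fun u v θ s =>
    quadIntegral volume (fun t => f (linePt s θ t)) (fun t => u (linePt s θ t))
      (fun t => v (linePt s θ t)) (fun t => g (linePt s θ t))
  have hQ_meas : ∀ {u v}, Measurable u → Measurable v → Measurable fun q : ℝ × ℝ => Q u v q.1 q.2 :=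
    fun hu hv => measurable_quadIntegral_param (by fun_prop) (by fun_prop) (by fun_prop)
      (by fun_prop)
  set B := ENNReal.ofReal (2 * r) * (∫⁻ x, f x ^ 2) * ∫⁻ x, g x ^ 2 with hB
  have hQ_gf : ∫⁻ θ in Set.Ioc 0 (2 * π), ∫⁻ s, Q g f θ s ≤ B := by
    rw [← ENNReal.pow_le_pow_left_iff two_ne_zero]
    refine (sq_lintegral_quadIntegral_linePt_le hf hg hf hg hfr hgr).trans_eq ?_
    ring
  have hQ_fg : ∫⁻ θ in Set.Ioc 0 (2 * π), ∫⁻ s, Q f g θ s ≤ B := by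
    rw [← ENNReal.pow_le_pow_left_iff two_ne_zero]
    refine (sq_lintegral_quadIntegral_linePt_le hf hf hg hg hfr hgr).trans_eq ?_
    ring
  calc _ = ∫⁻ θ in Set.Ioc 0 (2 * π), ∫⁻ s, (2 * Q g f θ s + 4 * Q f g θ s) :=
        lintegral_congr fun θ => lintegral_congr fun s =>
          sq_lintegral_mul_tailIntegral (by fun_prop) (by fun_prop)
    _ = 2 * (∫⁻ θ in Set.Ioc 0 (2 * π), ∫⁻ s, Q g f θ s) +
          4 * ∫⁻ θ in Set.Ioc 0 (2 * π), ∫⁻ s, Q f g θ s := by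
        have hQ_left : ∀ θ, Measurable (Q g f θ) := fun θ =>
          (hQ_meas hg hf).comp measurable_prodMk_left
        simp only [lintegral_add_left ((hQ_left _).const_mul _),
          lintegral_const_mul' _ _ ENNReal.ofNat_ne_top]
        rw [lintegral_add_left ((hQ_meas hg hf).lintegral_prod_right'.const_mul _)]
        simp only [lintegral_const_mul' _ _ ENNReal.ofNat_ne_top]
    _ ≤ 2 * B + 4 * B := by gcongr
    _ = 12 * ENNReal.ofReal r * (∫⁻ x, f x ^ 2) * ∫⁻ x, g x ^ 2 := by
        rw [hB, ENNReal.ofReal_mul zero_le_two, ENNReal.ofReal_ofNat]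
        ring

end Lines

section Attenuated

variable {f m m₁ m₂ : EuclideanSpace ℝ (Fin 2) → ℝ} {r s θ : ℝ}

theorem abs_exp_sub_exp_le_of_nonpos {u v : ℝ} (hu : u ≤ 0) (hv : v ≤ 0) :
    |exp u - exp v| ≤ |u - v| := by
  have h := (convex_Iic (0 : ℝ)).norm_image_sub_le_of_norm_deriv_le (f := exp) (C := 1)
    (fun x _ => differentiableAt_exp)
    (fun x hx => by simpa [abs_of_pos (exp_pos x)] using hx) hv hu
  rwa [one_mul] at h

theorem beam_linePt (m : EuclideanSpace ℝ (Fin 2) → ℝ) (s θ t : ℝ) :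
    beam m (linePt s θ t) θ = ∫ τ in Set.Ioi t, m (linePt s θ τ) := by
  simp only [beam, linePt_add_smul_dir]
  rw [← (measurePreserving_add_left volume t).setIntegral_preimage_emb
    (measurableEmbedding_addLeft t) (fun τ => m (linePt s θ τ)), Set.preimage_const_add_Ioi,
    sub_self]

theorem measurable_beam_linePt (hm : Measurable m) (s θ : ℝ) :
    Measurable fun t => beam m (linePt s θ t) θ := by
  have : Measurable fun q : ℝ × ℝ => m (linePt s θ q.1 + q.2 • dir θ) := by fun_prop
  exact this.stronglyMeasurable.integral_prod_right.measurable

theorem beam_nonneg (h0 : ∀ x, 0 ≤ m x) (x : EuclideanSpace ℝ (Fin 2)) (θ : ℝ) :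
    0 ≤ beam m x θ :=
  integral_nonneg fun _ => h0 _

theorem enorm_beam_linePt_sub_le (h₁ : Integrable fun t => m₁ (linePt s θ t))
    (h₂ : Integrable fun t => m₂ (linePt s θ t)) (t : ℝ) :
    ‖beam m₁ (linePt s θ t) θ - beam m₂ (linePt s θ t) θ‖ₑ ≤
      tailIntegral volume (fun τ => ‖m₁ (linePt s θ τ) - m₂ (linePt s θ τ)‖ₑ) t := by
  rw [beam_linePt, beam_linePt, ← integral_sub h₁.integrableOn h₂.integrableOn]
  exact enorm_integral_le_lintegral_enorm _

theorem integrable_mul_exp_neg_beam (hf : Integrable fun t => f (linePt s θ t))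
    (hm : Measurable m) (h0 : ∀ x, 0 ≤ m x) :
    Integrable fun t => f (linePt s θ t) * exp (-(beam m (linePt s θ t) θ)) := by
  refine hf.mul_bdd (c := 1) (measurable_beam_linePt hm s θ).neg.exp.aestronglyMeasurable
    (.of_forall fun t => ?_)
  rw [norm_of_nonneg (exp_pos _).le]
  exact exp_le_one_iff.2 (neg_nonpos.2 (beam_nonneg h0 _ _))

theorem enorm_radonF_sub_le (hm₁ : Measurable m₁) (hm₂ : Measurable m₂) (h₁ : ∀ x, 0 ≤ m₁ x)
    (h₂ : ∀ x, 0 ≤ m₂ x) (hf : Integrable fun t => f (linePt s θ t))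
    (hi₁ : Integrable fun t => m₁ (linePt s θ t)) (hi₂ : Integrable fun t => m₂ (linePt s θ t)) :
    ‖radonF f m₁ s θ - radonF f m₂ s θ‖ₑ ≤
      ∫⁻ t, ‖f (linePt s θ t)‖ₑ *
        tailIntegral volume (fun τ => ‖m₂ (linePt s θ τ) - m₁ (linePt s θ τ)‖ₑ) t := by
  rw [radonF, radonF, ← integral_sub (integrable_mul_exp_neg_beam hf hm₁ h₁)
    (integrable_mul_exp_neg_beam hf hm₂ h₂)]
  refine (enorm_integral_le_lintegral_enorm _).trans (lintegral_mono fun t => ?_)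
  rw [← mul_sub, enorm_mul]
  gcongr
  calc ‖exp (-(beam m₁ (linePt s θ t) θ)) - exp (-(beam m₂ (linePt s θ t) θ))‖ₑ
      ≤ ‖-beam m₁ (linePt s θ t) θ - -beam m₂ (linePt s θ t) θ‖ₑ :=
        enorm_le_iff_norm_le.2 <| abs_exp_sub_exp_le_of_nonpos
          (neg_nonpos.2 (beam_nonneg h₁ _ _)) (neg_nonpos.2 (beam_nonneg h₂ _ _))
    _ = ‖beam m₂ (linePt s θ t) θ - beam m₁ (linePt s θ t) θ‖ₑ := by rw [neg_sub_neg]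
    _ ≤ _ := enorm_beam_linePt_sub_le hi₂ hi₁ t

theorem ofReal_dataNormSq_le (G : ℝ → ℝ → ℝ) :
    ENNReal.ofReal (dataNormSq G) ≤ ∫⁻ θ in Set.Ioc 0 (2 * π), ∫⁻ s, ‖G s θ‖ₑ ^ 2 := by
  rw [dataNormSq, intervalIntegral.integral_of_le two_pi_pos.le]
  refine (Real.ofReal_le_enorm _).trans ?_
  refine (enorm_integral_le_lintegral_enorm _).trans (lintegral_mono fun θ => ?_)
  exact (enorm_integral_le_lintegral_enorm _).trans_eq (lintegral_congr fun s => enorm_pow _ _)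

theorem l2sq_nonneg (f : EuclideanSpace ℝ (Fin 2) → ℝ) : 0 ≤ l2sq f :=
  integral_nonneg fun _ => sq_nonneg _

theorem lintegral_enorm_sq_eq_ofReal_l2sq (hf : MemLp f 2) :
    ∫⁻ x, ‖f x‖ₑ ^ 2 = ENNReal.ofReal (l2sq f) := by
  rw [l2sq, ofReal_integral_eq_lintegral_ofReal hf.integrable_sq (.of_forall fun _ => sq_nonneg _)]
  refine lintegral_congr fun x => ?_
  rw [← enorm_pow, Real.enorm_of_nonneg (sq_nonneg _)]

theorem integrable_of_memLp_of_support_subset {α E : Type*} [MeasurableSpace α]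
    [NormedAddCommGroup E] {μ : Measure α} {p : ℝ≥0∞} {f : α → E} {S : Set α} (hp : 1 ≤ p)
    (hf : MemLp f p μ) (hμS : μ S ≠ ∞) (hS : Function.support f ⊆ S) : Integrable f μ :=
  memLp_one_iff_integrable.1 <|
    hf.mono_exponent_of_measure_support_ne_top (Function.support_subset_iff'.1 hS) hμS hp

theorem Admissible.memLp_two (hf : Admissible r f) : MemLp f 2 := by
  obtain ⟨hmeas, h0, ⟨C, hC⟩, hr⟩ := hf
  have hcompact : HasCompactSupport f :=
    .of_support_subset_isCompact (isCompact_closedBall 0 r) hr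
  refine hcompact.memLp_of_bound hmeas.aestronglyMeasurable C (.of_forall fun x => ?_)
  rw [norm_of_nonneg (h0 x)]
  exact hC x

theorem first_term_estimate_general (hr : 0 ≤ r) (hf : Measurable f) (hm₁ : Measurable m₁)
    (hm₂ : Measurable m₂) (hf_L2 : MemLp f 2) (hm₁_L2 : MemLp m₁ 2) (hm₂_L2 : MemLp m₂ 2)
    (hfr : Function.support f ⊆ Metric.closedBall 0 r)
    (hm₁r : Function.support m₁ ⊆ Metric.closedBall 0 r)
    (hm₂r : Function.support m₂ ⊆ Metric.closedBall 0 r)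
    (h₁ : ∀ x, 0 ≤ m₁ x) (h₂ : ∀ x, 0 ≤ m₂ x) :
    dataNormSq (fun s θ => radonF f m₁ s θ - radonF f m₂ s θ) ≤
      12 * r * l2sq f * l2sq (fun x => m₂ x - m₁ x) := by
  have hint : ∀ {u}, MemLp u 2 → Function.support u ⊆ Metric.closedBall 0 r → ∀ θ,
      ∀ᵐ s, Integrable fun t => u (linePt s θ t) := fun hu hur =>
    ae_integrable_linePt <|
      integrable_of_memLp_of_support_subset one_le_two hu measure_closedBall_lt_top.ne hur
  have hf_nonneg := l2sq_nonneg f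
  have hm_nonneg := l2sq_nonneg fun x => m₂ x - m₁ x
  rw [← ENNReal.ofReal_le_ofReal_iff (by positivity)]
  calc ENNReal.ofReal (dataNormSq fun s θ => radonF f m₁ s θ - radonF f m₂ s θ)
      ≤ ∫⁻ θ in Set.Ioc 0 (2 * π), ∫⁻ s, ‖radonF f m₁ s θ - radonF f m₂ s θ‖ₑ ^ 2 :=
        ofReal_dataNormSq_le _
    _ ≤ ∫⁻ θ in Set.Ioc 0 (2 * π), ∫⁻ s, (∫⁻ t, ‖f (linePt s θ t)‖ₑ * tailIntegral volume
          (fun τ => ‖m₂ (linePt s θ τ) - m₁ (linePt s θ τ)‖ₑ) t) ^ 2 := by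
        refine lintegral_mono fun θ => lintegral_mono_ae ?_
        filter_upwards [hint hf_L2 hfr θ, hint hm₁_L2 hm₁r θ, hint hm₂_L2 hm₂r θ]
          with s hsf hs₁ hs₂
        gcongr
        exact enorm_radonF_sub_le hm₁ hm₂ h₁ h₂ hsf hs₁ hs₂
    _ ≤ 12 * ENNReal.ofReal r * (∫⁻ x, ‖f x‖ₑ ^ 2) * ∫⁻ x, ‖m₂ x - m₁ x‖ₑ ^ 2 := by
        refine lintegral_sq_linePt_mul_tailIntegral_le (g := fun x => ‖m₂ x - m₁ x‖ₑ) hf.enorm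
          (hm₂.sub hm₁).enorm ((Function.support_comp_subset enorm_zero _).trans hfr)
          ((Function.support_comp_subset enorm_zero fun x => m₂ x - m₁ x).trans ?_)
        exact (Function.support_sub m₂ m₁).trans (Set.union_subset hm₂r hm₁r)
    _ = ENNReal.ofReal (12 * r * l2sq f * l2sq (fun x => m₂ x - m₁ x)) := by
        rw [lintegral_enorm_sq_eq_ofReal_l2sq hf_L2,
          lintegral_enorm_sq_eq_ofReal_l2sq (f := fun x => m₂ x - m₁ x) (hm₂_L2.sub hm₁_L2),
          ENNReal.ofReal_mul (by positivity), ENNReal.ofReal_mul (by positivity),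
          ENNReal.ofReal_mul (by norm_num), ENNReal.ofReal_ofNat]

end Attenuated

/-- First-term estimate in the Lipschitz bound for the Fréchet derivative of the
attenuated Radon transform:
`‖F(δλ, μ₁) − F(δλ, μ₂)‖² ≤ 4π rΩ ‖δλ‖² ‖μ₂ − μ₁‖²`. -/
theorem first_term_estimate (rΩ : ℝ) (hr : 0 < rΩ)
    (dlam mu1 mu2 : EuclideanSpace ℝ (Fin 2) → ℝ)
    (hdlam : Admissible rΩ dlam) (hmu1 : Admissible rΩ mu1) (hmu2 : Admissible rΩ mu2) :
    dataNormSq (fun s θ => radonF dlam mu1 s θ - radonF dlam mu2 s θ) ≤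
      4 * π * rΩ * l2sq dlam * l2sq (fun x => mu2 x - mu1 x) := by
  have h12 : (12 : ℝ) ≤ 4 * π := by linarith [pi_gt_three]
  have hl_L2 := hdlam.memLp_two
  have hm₁_L2 := hmu1.memLp_two
  have hm₂_L2 := hmu2.memLp_two
  obtain ⟨hl, -, -, hlr⟩ := hdlam
  obtain ⟨hm₁, h₁, -, hm₁r⟩ := hmu1
  obtain ⟨hm₂, h₂, -, hm₂r⟩ := hmu2
  refine (first_term_estimate_general hr.le hl hm₁ hm₂ hl_L2 hm₁_L2 hm₂_L2 hlr hm₁r hm₂r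
    h₁ h₂).trans ?_
  gcongr
  · exact l2sq_nonneg _
  · exact l2sq_nonneg _

end
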